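/- For every c > 0 and all x, y ∈ ℍⁿ = {x ∈ ℝⁿ : xₙ > 0} (n ≥ 2), the inequality (1/(1+c))·T(x,y) ≤ |x−y|/(|x−y| + 2c·L(xₙ, yₙ)) ≤ max{1, 1/c}·T(x,y) holds, where T(x,y) = |x−y|/√(|x−y|² + 4 xₙ yₙ) and L is the logarithmic mean. -/

import Mathlib

/-- The logarithmic mean of two positive reals. -/
noncomputable def logMean (a b : ℝ) : ℝ :=
  if a = b then a else (a - b) / (Real.log a - Real.log b)

/-!
The logarithmic mean lies between the geometric and the arithmetic mean: for `t ≥ 1` this amounts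
to `2 (t - 1) / (t + 1) ≤ log t` and `2 log t ≤ t - t⁻¹`, the latter being `s ≤ sinh s` at
`s = log t`. Write `S = √(d² + 4ab)`, where `d` is the distance of two points and `a`, `b` are their
heights. Since `S ≤ d + 2√(ab)`, the bound by the geometric mean yields the upper inequality.
Heights are 1-Lipschitz, so `S² ≥ (a - b)² + 4ab = (a + b)²`; together with `S ≥ d` and the bound by
the arithmetic mean this yields the lower inequality.
-/

open Real

section LogMean

variable {a b : ℝ}

theorem two_mul_log_le_sub_inv {t : ℝ} (ht : 1 ≤ t) : 2 * log t ≤ t - t⁻¹ := by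
  have h : log t ≤ sinh (log t) := self_le_sinh_iff.mpr (log_nonneg ht)
  rw [sinh_log (by positivity)] at h
  linarith

theorem sqrt_mul_mul_log_sub_log_le (hb : 0 < b) (hab : b ≤ a) :
    √(a * b) * (log a - log b) ≤ a - b := by
  have ha : 0 < a := hb.trans_le hab
  have hlog : log a - log b = 2 * log (√a / √b) := by
    rw [log_div (by positivity) (by positivity), log_sqrt ha.le, log_sqrt hb.le]
    ring
  have hratio : 1 ≤ √a / √b := (one_le_div (by positivity)).mpr (sqrt_le_sqrt hab)
  calc √(a * b) * (log a - log b)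
      ≤ √(a * b) * (√a / √b - (√a / √b)⁻¹) := by
        rw [hlog]
        gcongr
        exact two_mul_log_le_sub_inv hratio
    _ = √a ^ 2 - √b ^ 2 := by
        rw [sqrt_mul ha.le]
        field_simp
    _ = a - b := by rw [sq_sqrt ha.le, sq_sqrt hb.le]

theorem sub_le_half_add_mul_log_sub_log (hb : 0 < b) (hab : b ≤ a) :
    a - b ≤ (a + b) / 2 * (log a - log b) := by
  have ha : 0 < a := hb.trans_le hab
  have hlog : 2 * (a - b) / (a + b) ≤ log a - log b :=
    calc 2 * (a - b) / (a + b)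
        = 2 * ((a - b) / b) / ((a - b) / b + 2) := by
          have hden : (a - b) / b + 2 = (a + b) / b := by
            field_simp
            ring
          rw [hden]
          field_simp
      _ ≤ log (1 + (a - b) / b) := le_log_one_add_of_nonneg (div_nonneg (sub_nonneg.mpr hab) hb.le)
      _ = log a - log b := by
          rw [← log_div ha.ne' hb.ne', sub_div, div_self hb.ne', add_sub_cancel]
  rw [div_le_iff₀ (by positivity)] at hlog
  linarith

theorem logMean_self (a : ℝ) : logMean a a = a := if_pos rfl

theorem logMean_of_ne (hab : a ≠ b) : logMean a b = (a - b) / (log a - log b) := if_neg hab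

theorem logMean_comm (a b : ℝ) : logMean a b = logMean b a := by
  rcases eq_or_ne a b with rfl | hab
  · rfl
  · rw [logMean_of_ne hab, logMean_of_ne hab.symm, ← neg_sub b a, ← neg_sub (log b), neg_div_neg_eq]

theorem sqrt_mul_le_logMean (ha : 0 < a) (hb : 0 < b) : √(a * b) ≤ logMean a b := by
  wlog hab : b ≤ a generalizing a b
  · rw [mul_comm, logMean_comm]
    exact this hb ha (le_of_not_ge hab)
  rcases hab.eq_or_lt with rfl | hlt
  · rw [logMean_self, sqrt_mul_self hb.le]
  · rw [logMean_of_ne hlt.ne', le_div_iff₀ (sub_pos.mpr (log_lt_log hb hlt))]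
    exact sqrt_mul_mul_log_sub_log_le hb hab

theorem logMean_le_half_add (ha : 0 < a) (hb : 0 < b) : logMean a b ≤ (a + b) / 2 := by
  wlog hab : b ≤ a generalizing a b
  · rw [add_comm, logMean_comm]
    exact this hb ha (le_of_not_ge hab)
  rcases hab.eq_or_lt with rfl | hlt
  · rw [logMean_self, add_self_div_two]
  · rw [logMean_of_ne hlt.ne', div_le_iff₀ (sub_pos.mpr (log_lt_log hb hlt))]
    exact sub_le_half_add_mul_log_sub_log hb hab

theorem logMean_pos (ha : 0 < a) (hb : 0 < b) : 0 < logMean a b :=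
  (sqrt_pos.mpr (mul_pos ha hb)).trans_le (sqrt_mul_le_logMean ha hb)

end LogMean

section Comparison

variable {a b c d m : ℝ}

theorem sqrt_sq_add_four_mul_le (hab : 0 ≤ a * b) (hd : 0 ≤ d) :
    √(d ^ 2 + 4 * a * b) ≤ d + 2 * √(a * b) := by
  refine sqrt_le_iff.mpr ⟨by positivity, ?_⟩
  calc d ^ 2 + 4 * a * b
      = d ^ 2 + 4 * √(a * b) ^ 2 := by rw [sq_sqrt hab, mul_assoc]
    _ ≤ d ^ 2 + 4 * √(a * b) ^ 2 + 4 * (d * √(a * b)) := le_add_of_nonneg_right (by positivity)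
    _ = (d + 2 * √(a * b)) ^ 2 := by ring

theorem le_sqrt_sq_add_four_mul (hab : 0 ≤ a * b) : d ≤ √(d ^ 2 + 4 * a * b) :=
  le_sqrt_of_sq_le (by linarith)

theorem add_le_sqrt_sq_add_four_mul (hd : |a - b| ≤ d) : a + b ≤ √(d ^ 2 + 4 * a * b) := by
  have hsq : (a - b) ^ 2 ≤ d ^ 2 := sq_le_sq.mpr (hd.trans (le_abs_self d))
  exact le_sqrt_of_sq_le (by linarith [add_sq a b, sub_sq a b])

theorem one_div_mul_div_sqrt_le_div_add (hc : 0 < c) (hab : 0 ≤ a * b) (hd : |a - b| ≤ d)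
    (hm : 0 < m) (hm_le : m ≤ (a + b) / 2) :
    1 / (1 + c) * (d / √(d ^ 2 + 4 * a * b)) ≤ d / (d + 2 * c * m) := by
  have hd₀ : 0 ≤ d := (abs_nonneg _).trans hd
  have hden : d + 2 * c * m ≤ (1 + c) * √(d ^ 2 + 4 * a * b) :=
    calc d + 2 * c * m
        = d + c * (2 * m) := by ring
      _ ≤ √(d ^ 2 + 4 * a * b) + c * √(d ^ 2 + 4 * a * b) := by
          gcongr
          · exact le_sqrt_sq_add_four_mul hab
          · linarith [add_le_sqrt_sq_add_four_mul hd]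
      _ = (1 + c) * √(d ^ 2 + 4 * a * b) := by ring
  rw [div_mul_div_comm, one_mul]
  exact div_le_div_of_nonneg_left hd₀ (by positivity) hden

theorem div_add_le_max_mul_div_sqrt (hc : 0 < c) (hab : 0 < a * b) (hd : 0 ≤ d)
    (hm : √(a * b) ≤ m) :
    d / (d + 2 * c * m) ≤ max 1 (1 / c) * (d / √(d ^ 2 + 4 * a * b)) := by
  have hm₀ : 0 < m := (sqrt_pos.mpr hab).trans_le hm
  have hS : 0 < √(d ^ 2 + 4 * a * b) := sqrt_pos.mpr (by rw [mul_assoc]; positivity)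
  have hc_max : 1 ≤ max 1 (1 / c) * c := (div_le_iff₀ hc).mp (le_max_right _ _)
  have hden : √(d ^ 2 + 4 * a * b) ≤ max 1 (1 / c) * (d + 2 * c * m) :=
    calc √(d ^ 2 + 4 * a * b)
        ≤ d + 2 * √(a * b) := sqrt_sq_add_four_mul_le hab.le hd
      _ ≤ 1 * d + 1 * (2 * m) := by linarith
      _ ≤ max 1 (1 / c) * d + max 1 (1 / c) * c * (2 * m) := by
          gcongr
          exact le_max_left _ _
      _ = max 1 (1 / c) * (d + 2 * c * m) := by ring
  rw [← mul_div_assoc, div_le_div_iff₀ (by positivity) hS]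
  calc d * √(d ^ 2 + 4 * a * b)
      ≤ d * (max 1 (1 / c) * (d + 2 * c * m)) := by gcongr
    _ = max 1 (1 / c) * d * (d + 2 * c * m) := by ring

end Comparison

theorem stmt16_general {X : Type*} [PseudoMetricSpace X] {δ : X → ℝ} (hδ : LipschitzWith 1 δ)
    {c : ℝ} (hc : 0 < c) {x y : X} (hx : 0 < δ x) (hy : 0 < δ y) :
    1 / (1 + c) * (dist x y / √(dist x y ^ 2 + 4 * δ x * δ y)) ≤
        dist x y / (dist x y + 2 * c * logMean (δ x) (δ y)) ∧
      dist x y / (dist x y + 2 * c * logMean (δ x) (δ y)) ≤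
        max 1 (1 / c) * (dist x y / √(dist x y ^ 2 + 4 * δ x * δ y)) := by
  have hxy : 0 < δ x * δ y := mul_pos hx hy
  have hdist : |δ x - δ y| ≤ dist x y := by
    simpa only [Real.dist_eq, NNReal.coe_one, one_mul] using hδ.dist_le_mul x y
  exact ⟨one_div_mul_div_sqrt_le_div_add hc hxy.le hdist (logMean_pos hx hy)
      (logMean_le_half_add hx hy),
    div_add_le_max_mul_div_sqrt hc hxy dist_nonneg (sqrt_mul_le_logMean hx hy)⟩

theorem stmt16 (n : ℕ) (hn : 2 ≤ n) (c : ℝ) (hc : 0 < c)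
    (x y : EuclideanSpace ℝ (Fin n))
    (hx : 0 < x ⟨n - 1, by omega⟩) (hy : 0 < y ⟨n - 1, by omega⟩) :
    (1 / (1 + c)) *
        (dist x y / Real.sqrt (dist x y ^ 2 + 4 * x ⟨n - 1, by omega⟩ * y ⟨n - 1, by omega⟩)) ≤
      dist x y / (dist x y + 2 * c * logMean (x ⟨n - 1, by omega⟩) (y ⟨n - 1, by omega⟩)) ∧
    dist x y / (dist x y + 2 * c * logMean (x ⟨n - 1, by omega⟩) (y ⟨n - 1, by omega⟩)) ≤
      max 1 (1 / c) *
        (dist x y / Real.sqrt (dist x y ^ 2 + 4 * x ⟨n - 1, by omega⟩ * y ⟨n - 1, by omega⟩)) := by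
  have hheight : LipschitzWith 1 fun z : EuclideanSpace ℝ (Fin n) ↦ z ⟨n - 1, by omega⟩ :=
    LipschitzWith.mk_one fun u v ↦ PiLp.dist_apply_le u v _
  exact stmt16_general hheight hc hx hy
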